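/- Transitive percolation is order-invariant (generally covariant): the probability p^{c(Q)}(1−p)^{i(Q)} of generating a labelled partial order Q on m elements in a prescribed generation order does not depend on which linear extension of Q is used as the generation order. -/

import Mathlib

/-- The partial order generated by transitive percolation from the graph `g`:
the transitive closure of the directed edges (from lower to higher index). -/
def percRel (m : ℕ) (g : {q : Fin m × Fin m // q.1 < q.2} → Bool) (i j : Fin m) : Prop :=
  Relation.TransGen (fun i j : Fin m => ∃ h : i < j, g ⟨(i, j), h⟩ = true) i j

/-- The probability weight of a graph: each pair i < j is an edge with probability p,
independently. -/
def percWeight (m : ℕ) (p : ℝ) (g : {q : Fin m × Fin m // q.1 < q.2} → Bool) : ℝ :=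
  ∏ q : {q : Fin m × Fin m // q.1 < q.2}, (if g q then p else 1 - p)

/-!
Let `lam` be a linear extension of a finite poset `Q`. A graph on the indices generates `Q` along
`lam` exactly when it contains every covering pair of `Q` and only pairs that are comparable in `Q`:
a covering pair cannot be produced by transitivity from shorter steps, and conversely the covering
relation alone already generates the order. So covering pairs are forced to be edges, incomparable
pairs are forced not to be, and the remaining pairs are free. By independence the probability is
`p ^ c(Q) * (1 - p) ^ i(Q)`, in which `lam` no longer appears.
-/

open Finset Function Relation SimpleGraph

theorem transGen_onFun_equiv {α β : Type*} (e : α ≃ β) (r : β → β → Prop) :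
    TransGen (r on e) = (TransGen r on e) := by
  refine le_antisymm (TransGen.lift e le_rfl) fun a b hab ↦ ?_
  have hr : r ≤ ((r on e) on e.symm) := fun x y hxy ↦ by simpa [onFun] using hxy
  simpa [onFun] using TransGen.lift e.symm hr _ _ hab

theorem transGen_eq_lt_iff {α : Type*} [Preorder α] [LocallyFiniteOrder α] {r : α → α → Prop} :
    TransGen r = (· < ·) ↔ (· ⋖ ·) ≤ r ∧ r ≤ (· < ·) := by
  constructor
  · intro h
    have hgen_lt {x y : α} (hxy : TransGen r x y) : x < y := by rwa [h] at hxy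
    have hlt : r ≤ (· < ·) := fun _ _ hxy ↦ hgen_lt (.single hxy)
    refine ⟨fun x y hxy ↦ ?_, hlt⟩
    have hgen : TransGen r x y := h ▸ hxy.lt
    cases hgen with
    | single hr => exact hr
    | @tail z _ hxz hzy => exact absurd (hlt _ _ hzy) (hxy.2 (hgen_lt hxz))
  · rintro ⟨hcov, hlt⟩
    refine le_antisymm (transGen_minimal hlt) fun x y hxy ↦ ?_
    exact TransGen.mono hcov _ _ (transGen_covBy_of_lt hxy)

/-- The incomparability graph of a poset `Q`, whose edges are the unordered pairs of incomparable
elements. Its number of edges is the exponent `i(Q)`, just as that of Mathlib's `hasse` graph is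
`c(Q)`. -/
def incompGraph (α : Type*) [Preorder α] : SimpleGraph α where
  Adj := IncompRel (· ≤ ·)
  symm := ⟨fun _ _ h ↦ h.symm⟩
  loopless := ⟨fun _ h ↦ h.1 le_rfl⟩

theorem ncard_edgeSet_eq_card_filter_lt {ι α : Type*} [LinearOrder ι] [Fintype ι] (e : ι ≃ α)
    (G : SimpleGraph α) [DecidableRel G.Adj] :
    G.edgeSet.ncard =
      #{q : {q : ι × ι // q.1 < q.2} | G.Adj (e q.1.1) (e q.1.2)} := by
  rw [← Set.ncard_coe_finset]
  symm
  refine Set.ncard_congr (fun q _ ↦ s(e q.1.1, e q.1.2)) ?_ ?_ ?_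
  · intro q hq
    simpa using hq
  · rintro ⟨⟨i, j⟩, hij⟩ ⟨⟨k, l⟩, hkl⟩ - - h
    simp only [Sym2.eq_iff, e.injective.eq_iff] at h
    grind
  · intro z hz
    induction z with | _ x y
    obtain ⟨i, rfl⟩ := e.surjective x
    obtain ⟨j, rfl⟩ := e.surjective y
    rw [mem_edgeSet] at hz
    obtain hij | hji := (e.injective.ne_iff.1 hz.ne).lt_or_gt
    · exact ⟨⟨(i, j), hij⟩, by simpa using hz, rfl⟩
    · exact ⟨⟨(j, i), hji⟩, by simpa using hz.symm, Sym2.eq_swap⟩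

theorem sum_prod_ite_eq_pow_mul_pow {ι R : Type*} [Fintype ι] [DecidableEq ι] [CommSemiring R]
    {u v : R} (huv : u + v = 1) {a b : ι → Prop} [DecidablePred a] [DecidablePred b]
    (hab : ∀ q, a q → b q) :
    ∑ g : ι → Bool with ∀ q, (a q → g q) ∧ (g q → b q), ∏ q, (if g q then u else v) =
      u ^ #{q | a q} * v ^ #{q | ¬ b q} := by
  have hpi : ({g | ∀ q, (a q → g q) ∧ (g q → b q)} : Finset (ι → Bool)) =
      Fintype.piFinset fun q ↦ {x : Bool | (a q → x) ∧ (x → b q)} := by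
    ext g
    simp
  have hfactor (q : ι) :
      ∑ x : Bool with (a q → x = true) ∧ (x = true → b q), (if x then u else v) =
        (if a q then u else 1) * (if ¬ b q then v else 1) := by
    have := hab q
    by_cases ha : a q <;> by_cases hb : b q <;> simp_all [sum_filter]
  calc ∑ g : ι → Bool with ∀ q, (a q → g q) ∧ (g q → b q), ∏ q, (if g q then u else v)
      = ∏ q, ∑ x : Bool with (a q → x = true) ∧ (x = true → b q), (if x then u else v) := by
        rw [hpi, ← prod_univ_sum _ fun _ x ↦ if x = true then u else v]
    _ = ∏ q, (if a q then u else 1) * (if ¬ b q then v else 1) :=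
        prod_congr rfl fun q _ ↦ hfactor q
    _ = u ^ #{q | a q} * v ^ #{q | ¬ b q} := by
        simp only [prod_mul_distrib, prod_ite, prod_const, one_pow, mul_one]

section Percolation

variable {m : ℕ} {α : Type*}

/-- The edge relation on indices of the percolation graph `g`, oriented from lower to higher index;
`percRel` is its transitive closure. -/
def percEdge (g : {q : Fin m × Fin m // q.1 < q.2} → Bool) (i j : Fin m) : Prop :=
  ∃ h : i < j, g ⟨(i, j), h⟩ = true

theorem percRel_eq_transGen_percEdge (g : {q : Fin m × Fin m // q.1 < q.2} → Bool) :
    percRel m g = TransGen (percEdge g) := rfl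

theorem forall_percRel_iff_lt_iff [Preorder α] {lam : Fin m ≃ α}
    (hlam : ∀ i j, lam i < lam j → i < j)
    {g : {q : Fin m × Fin m // q.1 < q.2} → Bool} :
    (∀ i j, percRel m g i j ↔ lam i < lam j) ↔
      ∀ q, (lam q.1.1 ⋖ lam q.1.2 → g q) ∧ (g q → lam q.1.1 < lam q.1.2) := by
  classical
  let : Fintype α := .ofEquiv _ lam
  let : LocallyFiniteOrder α := Fintype.toLocallyFiniteOrder
  calc (∀ i j, percRel m g i j ↔ lam i < lam j)
      ↔ TransGen (percEdge g on lam.symm) = (· < ·) := by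
        simp [transGen_onFun_equiv, funext_iff, onFun, lam.symm.forall_congr_left,
          percRel_eq_transGen_percEdge]
    _ ↔ (· ⋖ ·) ≤ (percEdge g on lam.symm) ∧ (percEdge g on lam.symm) ≤ (· < ·) :=
        transGen_eq_lt_iff
    _ ↔ ∀ q, (lam q.1.1 ⋖ lam q.1.2 → g q) ∧ (g q → lam q.1.1 < lam q.1.2) := by
        simp only [Pi.le_def, le_Prop_eq, onFun, lam.symm.forall_congr_left, Equiv.symm_symm,
          lam.symm_apply_apply, percEdge, Subtype.forall, Prod.forall]
        constructor
        · rintro ⟨hcov, hlt⟩ i j hij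
          exact ⟨fun hc ↦ (hcov i j hc).2, fun hg ↦ hlt i j ⟨hij, hg⟩⟩
        · intro h
          refine ⟨fun i j hc ↦ ?_, fun i j ⟨hij, hg⟩ ↦ (h i j hij).2 hg⟩
          have hij := hlam i j hc.lt
          exact ⟨hij, (h i j hij).1 hc⟩

open Classical in
theorem transitive_percolation_order_invariant_general [PartialOrder α] (p : ℝ) (lam : Fin m ≃ α)
    (hlam : ∀ i j, lam i < lam j → i < j) :
    ∑ g : {q : Fin m × Fin m // q.1 < q.2} → Bool with
        ∀ i j : Fin m, percRel m g i j ↔ lam i < lam j, percWeight m p g =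
      p ^ (hasse α).edgeSet.ncard * (1 - p) ^ (incompGraph α).edgeSet.ncard := by
  have hnot (q : {q : Fin m × Fin m // q.1 < q.2}) : ¬ lam q.1.2 < lam q.1.1 :=
    fun h ↦ q.2.not_gt (hlam _ _ h)
  have hcov (q : {q : Fin m × Fin m // q.1 < q.2}) :
      (hasse α).Adj (lam q.1.1) (lam q.1.2) ↔ lam q.1.1 ⋖ lam q.1.2 :=
    hasse_adj.trans (or_iff_left fun h ↦ hnot q h.lt)
  have hincomp (q : {q : Fin m × Fin m // q.1 < q.2}) :
      (incompGraph α).Adj (lam q.1.1) (lam q.1.2) ↔ ¬ lam q.1.1 < lam q.1.2 := by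
    have hne : lam q.1.1 ≠ lam q.1.2 := lam.injective.ne q.2.ne
    simp [incompGraph, IncompRel, hne.le_iff_lt, hne.symm.le_iff_lt, hnot]
  simp only [forall_percRel_iff_lt_iff hlam, ncard_edgeSet_eq_card_filter_lt lam, hcov, hincomp,
    percWeight]
  exact sum_prod_ite_eq_pow_mul_pow (add_sub_cancel p 1) fun q hq ↦ hq.lt

end Percolation

open Classical in
/-- Transitive percolation is generally covariant: the probability of generating a fixed
labelled poset Q (on ground set α) in the order prescribed by a linear extension λ does not
depend on which linear extension λ of Q is used as the generation order. -/
theorem transitive_percolation_order_invariant (m : ℕ) (p : ℝ) (hp : p ∈ Set.Ioo (0:ℝ) 1)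
    (α : Type) (lt : α → α → Prop)
    (hirr : ∀ x, ¬ lt x x) (htrans : ∀ x y z, lt x y → lt y z → lt x z)
    (lam₁ lam₂ : Fin m ≃ α)
    (hle₁ : ∀ i j, lt (lam₁ i) (lam₁ j) → i < j)
    (hle₂ : ∀ i j, lt (lam₂ i) (lam₂ j) → i < j) :
    ∑ g ∈ Finset.univ.filter
        (fun g : {q : Fin m × Fin m // q.1 < q.2} → Bool =>
          ∀ i j : Fin m, percRel m g i j ↔ lt (lam₁ i) (lam₁ j)),
      percWeight m p g
    = ∑ g ∈ Finset.univ.filter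
        (fun g : {q : Fin m × Fin m // q.1 < q.2} → Bool =>
          ∀ i j : Fin m, percRel m g i j ↔ lt (lam₂ i) (lam₂ j)),
      percWeight m p g := by
  have : IsStrictOrder α lt := { irrefl := hirr, trans := htrans }
  let : PartialOrder α := partialOrderOfSO lt
  exact (transitive_percolation_order_invariant_general p lam₁ hle₁).trans
    (transitive_percolation_order_invariant_general p lam₂ hle₂).symm
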